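/- For every (z,w) ∈ A with z ≠ w and every n ≥ 1, writing (z_n, w_n) = f^n(z,w), one has |z_n − w_n| < 1/(|z − w|⁻¹ + n); in particular n·|z_n − w_n| < 1 for all n ≥ 1. -/

import Mathlib

open Filter Topology

/-- The restriction of the map `f(z,w) = (z(1-(z-w)), w(1+(z-w)))` to `ℝ² ⊂ ℂ²`
(`f` maps `ℝ²` into `ℝ²`). -/
noncomputable def fR : ℝ × ℝ → ℝ × ℝ :=
  fun p => (p.1 * (1 - (p.1 - p.2)), p.2 * (1 + (p.1 - p.2)))

/-- The triangle `A = {(z,w) ∈ ℝ² : z > 0, w > 0, z + w < 1}`. -/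
def A : Set (ℝ × ℝ) := {p : ℝ × ℝ | 0 < p.1 ∧ 0 < p.2 ∧ p.1 + p.2 < 1}

/-- The difference of the coordinates is multiplied by `1 - (z + w)` under `fR`. -/
lemma fR_fst_sub_snd (p : ℝ × ℝ) :
    (fR p).1 - (fR p).2 = (p.1 - p.2) * (1 - (p.1 + p.2)) := by
  simp only [fR]
  ring

lemma abs_sub_lt_add_of_mem_A {p : ℝ × ℝ} (hp : p ∈ A) : |p.1 - p.2| < p.1 + p.2 := by
  obtain ⟨hz, hw, -⟩ := hp
  exact abs_sub_lt_iff.mpr ⟨by linarith, by linarith⟩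

lemma fR_mem_A {p : ℝ × ℝ} (hp : p ∈ A) : fR p ∈ A := by
  obtain ⟨hz, hw, hs⟩ := hp
  refine ⟨mul_pos hz (by linarith), mul_pos hw (by linarith), ?_⟩
  simp only [fR]
  nlinarith [sq_nonneg (p.1 - p.2)]

lemma fR_fst_ne_snd {p : ℝ × ℝ} (hp : p ∈ A) (hne : p.1 ≠ p.2) : (fR p).1 ≠ (fR p).2 := by
  rw [← sub_ne_zero, fR_fst_sub_snd]
  exact mul_ne_zero (sub_ne_zero.mpr hne) (by linarith [hp.2.2])

/-- Each application of `fR` increases `|z - w|⁻¹` by more than one. -/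
lemma inv_abs_sub_add_one_lt {p : ℝ × ℝ} (hp : p ∈ A) (hne : p.1 ≠ p.2) :
    |p.1 - p.2|⁻¹ + 1 < |(fR p).1 - (fR p).2|⁻¹ := by
  have hd : 0 < |p.1 - p.2| := abs_pos.mpr (sub_ne_zero.mpr hne)
  have hs : 0 < 1 - (p.1 + p.2) := by linarith [hp.2.2]
  have hds := abs_sub_lt_add_of_mem_A hp
  rw [fR_fst_sub_snd, abs_mul, abs_of_pos hs,
    lt_inv_comm₀ (by positivity) (by positivity), ← one_div, lt_div_iff₀ (by positivity)]
  have h : |p.1 - p.2| * (1 - (p.1 + p.2)) * (|p.1 - p.2|⁻¹ + 1)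
      = (1 - (p.1 + p.2)) * (1 + |p.1 - p.2|) := by
    field_simp
  rw [h]
  nlinarith

lemma iterate_fR_mem_offDiag {p : ℝ × ℝ} (hp : p ∈ A ∧ p.1 ≠ p.2) (n : ℕ) :
    fR^[n] p ∈ A ∧ (fR^[n] p).1 ≠ (fR^[n] p).2 := by
  induction n with
  | zero => exact hp
  | succ n ih =>
    rw [Function.iterate_succ_apply']
    exact ⟨fR_mem_A ih.1, fR_fst_ne_snd ih.1 ih.2⟩

lemma inv_abs_sub_add_le_iterate {p : ℝ × ℝ} (hp : p ∈ A ∧ p.1 ≠ p.2) (n : ℕ) :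
    |p.1 - p.2|⁻¹ + n ≤ |(fR^[n] p).1 - (fR^[n] p).2|⁻¹ := by
  induction n with
  | zero => simp
  | succ n ih =>
    have hn := iterate_fR_mem_offDiag hp n
    have hlt := inv_abs_sub_add_one_lt hn.1 hn.2
    rw [Function.iterate_succ_apply']
    push_cast
    linarith

/-- Rate of convergence to the diagonal: for `(z,w) ∈ A` with `z ≠ w` and `n ≥ 1`,
`|z_n - w_n| < 1/(|z-w|⁻¹ + n)`; in particular `n·|z_n - w_n| < 1`. -/
theorem rate_of_convergence_to_diagonal :
    ∀ p ∈ A, p.1 ≠ p.2 → ∀ n : ℕ, 1 ≤ n →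
      |(fR^[n] p).1 - (fR^[n] p).2| < 1 / (|p.1 - p.2|⁻¹ + n) ∧
      (n : ℝ) * |(fR^[n] p).1 - (fR^[n] p).2| < 1 := by
  intro p hp hne n hn
  have hpos : 0 < |p.1 - p.2| := abs_pos.mpr (sub_ne_zero.mpr hne)
  obtain ⟨m, rfl⟩ := Nat.exists_eq_add_of_le' hn
  have hm := iterate_fR_mem_offDiag ⟨hp, hne⟩ m
  have hm' := iterate_fR_mem_offDiag ⟨hp, hne⟩ (m + 1)
  have hd : 0 < |(fR^[m + 1] p).1 - (fR^[m + 1] p).2| :=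
    abs_pos.mpr (sub_ne_zero.mpr hm'.2)
  have hrate : |p.1 - p.2|⁻¹ + (m + 1 : ℕ) < |(fR^[m + 1] p).1 - (fR^[m + 1] p).2|⁻¹ := by
    have hle := inv_abs_sub_add_le_iterate ⟨hp, hne⟩ m
    have hlt := inv_abs_sub_add_one_lt hm.1 hm.2
    rw [Function.iterate_succ_apply']
    push_cast
    linarith
  constructor
  · rw [one_div]
    exact (lt_inv_comm₀ (by positivity) hd).mp hrate
  · rw [← lt_div_iff₀ hd, one_div]
    exact (lt_add_of_pos_left _ (inv_pos.mpr hpos)).trans hrate
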